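/- Let Γ = (G, σ) be a signed graph on a finite nonempty vertex set of n vertices with balanced clique number ω_b(Γ) ≥ 1. Then the largest eigenvalue of its adjacency matrix satisfies λ₁(A(Γ)) ≤ n·(1 − 1/ω_b(Γ)). -/

import Mathlib

open scoped Classical
open Finset

variable {V : Type*}

noncomputable def adjMx [Fintype V] (G : SimpleGraph V) : Matrix V V ℝ :=
  Matrix.of fun u v => if G.Adj u v then 1 else 0

noncomputable def degMx [Fintype V] [DecidableEq V] (G : SimpleGraph V) : Matrix V V ℝ :=
  Matrix.diagonal fun v => ∑ u, if G.Adj v u then (1 : ℝ) else 0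

noncomputable def signlessLap [Fintype V] [DecidableEq V] (G : SimpleGraph V) : Matrix V V ℝ :=
  degMx G + adjMx G

lemma adjMx_isHermitian [Fintype V] (G : SimpleGraph V) : (adjMx G).IsHermitian := by
  ext u v
  simp [adjMx, Matrix.conjTranspose_apply, SimpleGraph.adj_comm]

lemma signlessLap_isHermitian [Fintype V] [DecidableEq V] (G : SimpleGraph V) :
    (signlessLap G).IsHermitian :=
  (Matrix.isHermitian_diagonal _).add (adjMx_isHermitian G)

noncomputable def maxEig [Fintype V] [DecidableEq V] {A : Matrix V V ℝ}
    (hA : A.IsHermitian) : ℝ := ⨆ v, hA.eigenvalues v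

noncomputable def qIndex [Fintype V] [DecidableEq V] (G : SimpleGraph V) : ℝ :=
  maxEig (signlessLap_isHermitian G)

noncomputable def lambda1 [Fintype V] [DecidableEq V] (G : SimpleGraph V) : ℝ :=
  maxEig (adjMx_isHermitian G)

/-- Maximum size of a clique of `G` containing vertex `v`. -/
noncomputable def cliqueAt (G : SimpleGraph V) (v : V) : ℕ :=
  sSup {n | ∃ s : Finset V, G.IsNClique n s ∧ v ∈ s}

/-- Maximum size of a clique of `G` containing both `u` and `v`. -/
noncomputable def cliqueAtEdge (G : SimpleGraph V) (u v : V) : ℕ :=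
  sSup {n | ∃ s : Finset V, G.IsNClique n s ∧ u ∈ s ∧ v ∈ s}

/-- A balanced clique of the signed graph `(G, σ)`: a clique of `G` admitting a switching
function `η` with values `±1` such that `σ u v = η u * η v` on all its edges. -/
def IsBalancedClique (G : SimpleGraph V) (σ : V → V → ℝ) (s : Finset V) : Prop :=
  G.IsClique ↑s ∧ ∃ η : V → ℝ, (∀ v ∈ s, η v = 1 ∨ η v = -1) ∧
    ∀ u ∈ s, ∀ v ∈ s, u ≠ v → σ u v = η u * η v

/-- The balanced clique number of the signed graph `(G, σ)`. -/
noncomputable def balancedCliqueNum (G : SimpleGraph V) (σ : V → V → ℝ) : ℕ :=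
  sSup {n | ∃ s : Finset V, s.card = n ∧ IsBalancedClique G σ s}

/-- Maximum size of a balanced clique of the signed graph `(G, σ)` containing `v`. -/
noncomputable def balancedCliqueAt (G : SimpleGraph V) (σ : V → V → ℝ) (v : V) : ℕ :=
  sSup {n | ∃ s : Finset V, s.card = n ∧ IsBalancedClique G σ s ∧ v ∈ s}

/-!
Let `x` be an eigenvector and `η` a choice of signs with `x v = η v * |x v|`. Switching by `η`
replaces `x` by `|x|`, after which negative edges only decrease the quadratic form; discarding them
leaves an unsigned graph, every clique of which is balanced in `Γ`. Hence the Motzkin–Straus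
inequality bounds `x ⬝ᵥ A *ᵥ x` by `(1 - 1 / ω_b) * (∑ v, |x v|) ^ 2`, and Cauchy–Schwarz bounds
`(∑ v, |x v|) ^ 2` by `n * (x ⬝ᵥ x)`.

The Motzkin–Straus inequality is proved by symmetrization: if two non-adjacent vertices carry
weight, the form is affine along the transfer of weight between them, so the weight of one of them
can be moved entirely to the other without decreasing the form. This ends with weights supported on
a clique.
-/

open Matrix

section TransferWeight

variable [DecidableEq V]

/-- The vertex weights obtained from `y` by Zykov symmetrization: the whole weight of `v` is moved
to `u`. For `u = v` this is `y` itself. -/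
def transferWeight {R : Type*} [AddCommGroup R] (y : V → R) (u v : V) : V → R :=
  y + (Pi.single u (y v) - Pi.single v (y v))

lemma sum_transferWeight [Fintype V] {R : Type*} [AddCommGroup R] (y : V → R) (u v : V) :
    ∑ w, transferWeight y u v w = ∑ w, y w := by
  simp [transferWeight, sum_add_distrib]

lemma support_transferWeight_ssubset {R : Type*} [AddCommGroup R] {y : V → R} {u v : V}
    (hu : y u ≠ 0) (hv : y v ≠ 0) (huv : u ≠ v) :
    Function.support (transferWeight y u v) ⊂ Function.support y := by
  refine Set.ssubset_iff_exists.mpr ⟨fun w hw hyw => hw ?_, v, hv, ?_⟩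
  · have hwu : w ≠ u := by rintro rfl; exact hu hyw
    have hwv : w ≠ v := by rintro rfl; exact hv hyw
    simp [transferWeight, hyw, hwu, hwv]
  · simp [transferWeight, huv.symm]

lemma transferWeight_nonneg {R : Type*} [AddCommGroup R] [PartialOrder R] [IsOrderedAddMonoid R]
    {y : V → R} (hy : 0 ≤ y) (u v : V) :
    0 ≤ transferWeight y u v := by
  have hu : 0 ≤ (Pi.single u (y v) : V → R) := Pi.single_nonneg.mpr (hy v)
  have hv : Pi.single v (y v) ≤ y := by
    intro w
    rcases eq_or_ne w v with rfl | hwv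
    · simp
    · simpa [hwv] using hy w
  rw [transferWeight, add_sub_left_comm]
  exact add_nonneg hu (sub_nonneg.mpr hv)

end TransferWeight

section MotzkinStraus

variable [Fintype V] (H : SimpleGraph V) [DecidableRel H.Adj]

lemma dotProduct_mulVec_add_of_isSymm {R : Type*} [CommRing R] {A : Matrix V V R} (hA : A.IsSymm)
    (y d : V → R) :
    (y + d) ⬝ᵥ A *ᵥ (y + d) = y ⬝ᵥ A *ᵥ y + 2 * (d ⬝ᵥ A *ᵥ y) + d ⬝ᵥ A *ᵥ d := by
  have hswap : y ⬝ᵥ A *ᵥ d = d ⬝ᵥ A *ᵥ y := by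
    rw [dotProduct_mulVec, ← mulVec_transpose, hA.eq, dotProduct_comm]
  rw [mulVec_add, add_dotProduct, dotProduct_add, dotProduct_add, hswap]
  ring

lemma dotProduct_adjMatrix_mulVec_of_isClique_support {R : Type*} [Ring R] {y : V → R}
    (hy : H.IsClique (Function.support y)) :
    y ⬝ᵥ H.adjMatrix R *ᵥ y = (∑ v, y v) ^ 2 - ∑ v, y v ^ 2 := by
  have hcomplete : y ⬝ᵥ H.adjMatrix R *ᵥ y = y ⬝ᵥ (of 1 - 1 : Matrix V V R) *ᵥ y := by
    simp only [dotProduct, mulVec, mul_sum]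
    refine sum_congr rfl fun u _ => sum_congr rfl fun v _ => ?_
    rcases eq_or_ne (y u) 0 with hu | hu
    · simp [hu]
    rcases eq_or_ne (y v) 0 with hv | hv
    · simp [hv]
    rcases eq_or_ne u v with rfl | huv
    · simp
    · simp [hy hu hv huv, huv]
  rw [hcomplete, sub_mulVec, dotProduct_sub, one_mulVec]
  simp [dotProduct, mulVec, sq, sum_mul]

lemma sq_sum_le_card_support_mul_sum_sq {R : Type*} [Ring R] [LinearOrder R] [IsStrictOrderedRing R]
    (y : V → R) :
    (∑ v, y v) ^ 2 ≤ #{v | y v ≠ 0} * ∑ v, y v ^ 2 :=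
  calc (∑ v, y v) ^ 2 = (∑ v with y v ≠ 0, y v) ^ 2 := by rw [sum_filter_ne_zero]
    _ ≤ #{v | y v ≠ 0} * ∑ v with y v ≠ 0, y v ^ 2 := sq_sum_le_card_mul_sum_sq
    _ ≤ #{v | y v ≠ 0} * ∑ v, y v ^ 2 := by
      gcongr
      exact subset_univ _

variable {K : Type*} [Field K] [LinearOrder K] [IsStrictOrderedRing K]

lemma dotProduct_adjMatrix_mulVec_le_of_isClique_support {k : ℕ} (hH : H.CliqueFree (k + 1))
    {y : V → K} (hy : H.IsClique (Function.support y)) :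
    y ⬝ᵥ H.adjMatrix K *ᵥ y ≤ (1 - 1 / k) * (∑ v, y v) ^ 2 := by
  have hcard : #{v | y v ≠ 0} ≤ k := by
    by_contra! hlt
    refine hH.mono hlt _ ⟨?_, rfl⟩
    simpa [Function.support] using hy
  have hsq : (∑ v, y v) ^ 2 / k ≤ ∑ v, y v ^ 2 := by
    refine div_le_of_le_mul₀ k.cast_nonneg (sum_nonneg fun v _ => sq_nonneg _) ?_
    calc (∑ v, y v) ^ 2 ≤ #{v | y v ≠ 0} * ∑ v, y v ^ 2 := sq_sum_le_card_support_mul_sum_sq y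
      _ ≤ (∑ v, y v ^ 2) * k := by
        rw [mul_comm]
        gcongr
  rw [dotProduct_adjMatrix_mulVec_of_isClique_support H hy]
  linear_combination hsq

lemma dotProduct_adjMatrix_mulVec_transferWeight [DecidableEq V] {R : Type*} [CommRing R]
    (y : V → R) {u v : V} (huv : ¬ H.Adj u v) :
    transferWeight y u v ⬝ᵥ H.adjMatrix R *ᵥ transferWeight y u v =
      y ⬝ᵥ H.adjMatrix R *ᵥ y +
        2 * (y v * ((H.adjMatrix R *ᵥ y) u - (H.adjMatrix R *ᵥ y) v)) := by
  have hvu : ¬ H.Adj v u := fun h => huv h.symm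
  rw [transferWeight, dotProduct_mulVec_add_of_isSymm H.isSymm_adjMatrix]
  simp [mulVec_sub, sub_dotProduct, huv, hvu, mul_sub]

/-- For `k = 0` the vertex type is empty, so the junk value `1 / 0 = 0` is harmless. -/
theorem motzkin_straus {k : ℕ} (hH : H.CliqueFree (k + 1)) {y : V → K} (hy : 0 ≤ y) :
    y ⬝ᵥ H.adjMatrix K *ᵥ y ≤ (1 - 1 / k) * (∑ v, y v) ^ 2 := by
  induction hS : Function.support y using WellFoundedLT.induction generalizing y with
  | ind S ih =>
    subst hS
    by_cases hclique : H.IsClique (Function.support y)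
    · exact dotProduct_adjMatrix_mulVec_le_of_isClique_support H hH hclique
    obtain ⟨u, v, hu, hv, huv, hadj, hle⟩ : ∃ u v, y u ≠ 0 ∧ y v ≠ 0 ∧ u ≠ v ∧ ¬ H.Adj u v ∧
        (H.adjMatrix K *ᵥ y) v ≤ (H.adjMatrix K *ᵥ y) u := by
      simp only [SimpleGraph.IsClique, Set.Pairwise, not_forall] at hclique
      obtain ⟨u, hu, v, hv, huv, hadj⟩ := hclique
      rcases le_total ((H.adjMatrix K *ᵥ y) v) ((H.adjMatrix K *ᵥ y) u) with h | h
      · exact ⟨u, v, hu, hv, huv, hadj, h⟩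
      · exact ⟨v, u, hv, hu, huv.symm, fun h => hadj h.symm, h⟩
    calc y ⬝ᵥ H.adjMatrix K *ᵥ y
        ≤ transferWeight y u v ⬝ᵥ H.adjMatrix K *ᵥ transferWeight y u v := by
          rw [dotProduct_adjMatrix_mulVec_transferWeight H y hadj]
          have := mul_nonneg (hy v) (sub_nonneg.mpr hle)
          linarith
      _ ≤ (1 - 1 / k) * (∑ w, transferWeight y u v w) ^ 2 :=
          ih _ (support_transferWeight_ssubset hu hv huv) (transferWeight_nonneg hy u v) rfl
      _ = (1 - 1 / k) * (∑ w, y w) ^ 2 := by rw [sum_transferWeight]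

end MotzkinStraus

section SignedGraph

/-- The adjacency matrix of the signed graph `(G, σ)`. The values of `σ` off the edges of `G` are
irrelevant. -/
noncomputable def signedAdjMatrix (G : SimpleGraph V) (σ : V → V → ℝ) : Matrix V V ℝ :=
  of fun u v => if G.Adj u v then σ u v else 0

variable {G : SimpleGraph V} {σ : V → V → ℝ}

lemma IsBalancedClique.card_le_balancedCliqueNum [Finite V] {s : Finset V}
    (hs : IsBalancedClique G σ s) : #s ≤ balancedCliqueNum G σ := by
  cases nonempty_fintype V
  refine le_csSup ⟨Fintype.card V, ?_⟩ ⟨s, rfl, hs⟩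
  rintro _ ⟨t, rfl, -⟩
  exact card_le_univ t

variable (G)

/-- The positive part of the signed graph `(G, σ)` after switching by `η`: the unsigned graph formed
by the edges of sign `η u * η v`. -/
def switchedPositiveGraph (hσ : ∀ u v, σ u v = σ v u) (η : V → ℝ) : SimpleGraph V where
  Adj u v := G.Adj u v ∧ σ u v = η u * η v
  symm := ⟨fun u v h => ⟨h.1.symm, by rw [hσ, h.2, mul_comm]⟩⟩
  loopless := ⟨fun u h => G.loopless.irrefl u h.1⟩

lemma cliqueFree_switchedPositiveGraph [Finite V] (hσ : ∀ u v, σ u v = σ v u) {η : V → ℝ}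
    (hη : ∀ v, η v = 1 ∨ η v = -1) :
    (switchedPositiveGraph G hσ η).CliqueFree (balancedCliqueNum G σ + 1) := by
  intro s hs
  have hbal : IsBalancedClique G σ s :=
    ⟨fun u hu v hv huv => (hs.isClique hu hv huv).1, η, fun v _ => hη v,
      fun u hu v hv huv => (hs.isClique hu hv huv).2⟩
  have := hbal.card_le_balancedCliqueNum
  have := hs.card_eq
  lia

lemma mul_signedAdjMatrix_mul_le_adjMatrix_switchedPositiveGraph (hσ : ∀ u v, σ u v = σ v u)
    (hsign : ∀ u v, G.Adj u v → σ u v = 1 ∨ σ u v = -1) {η : V → ℝ}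
    (hη : ∀ v, η v = 1 ∨ η v = -1) (u v : V) :
    η u * signedAdjMatrix G σ u v * η v ≤ (switchedPositiveGraph G hσ η).adjMatrix ℝ u v := by
  rw [SimpleGraph.adjMatrix_apply]
  by_cases hG : G.Adj u v
  · rcases hη u with hu | hu <;> rcases hη v with hv | hv <;> rcases hsign u v hG with h | h <;>
      norm_num [signedAdjMatrix, switchedPositiveGraph, hG, hu, hv, h]
  · simp [signedAdjMatrix, switchedPositiveGraph, hG]

lemma dotProduct_mulVec_le_of_switching [Fintype V] {R : Type*} [CommRing R] [LinearOrder R]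
    [IsOrderedRing R] {A B : Matrix V V R} {η x : V → R}
    (hx : ∀ v, x v = η v * |x v|) (hAB : ∀ u v, η u * A u v * η v ≤ B u v) :
    x ⬝ᵥ A *ᵥ x ≤ |x| ⬝ᵥ B *ᵥ |x| := by
  simp only [dotProduct, mulVec, mul_sum, Pi.abs_apply]
  refine sum_le_sum fun u _ => sum_le_sum fun v _ => ?_
  calc x u * (A u v * x v) = |x u| * (η u * A u v * η v * |x v|) := by
        conv_lhs => rw [hx u, hx v]
        ring
    _ ≤ |x u| * (B u v * |x v|) := by gcongr; exact hAB u v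

theorem dotProduct_signedAdjMatrix_mulVec_le [Fintype V] (hσ : ∀ u v, σ u v = σ v u)
    (hsign : ∀ u v, G.Adj u v → σ u v = 1 ∨ σ u v = -1) (x : V → ℝ) :
    x ⬝ᵥ signedAdjMatrix G σ *ᵥ x ≤ (1 - 1 / balancedCliqueNum G σ) * (∑ v, |x v|) ^ 2 := by
  have hsigns : ∀ v, ∃ ε : ℝ, (ε = 1 ∨ ε = -1) ∧ x v = ε * |x v| := by
    intro v
    rcases abs_choice (x v) with h | h
    · exact ⟨1, .inl rfl, by rw [h, one_mul]⟩
    · exact ⟨-1, .inr rfl, by rw [h, neg_one_mul, neg_neg]⟩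
  choose η hη hx using hsigns
  calc x ⬝ᵥ signedAdjMatrix G σ *ᵥ x
      ≤ |x| ⬝ᵥ (switchedPositiveGraph G hσ η).adjMatrix ℝ *ᵥ |x| :=
        dotProduct_mulVec_le_of_switching hx
          (mul_signedAdjMatrix_mul_le_adjMatrix_switchedPositiveGraph G hσ hsign hη)
    _ ≤ (1 - 1 / balancedCliqueNum G σ) * (∑ v, |x v|) ^ 2 :=
        motzkin_straus _ (cliqueFree_switchedPositiveGraph G hσ hη) (abs_nonneg x)

end SignedGraph

lemma maxEig_le_of_dotProduct_mulVec_le [Fintype V] [DecidableEq V] [Nonempty V]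
    {A : Matrix V V ℝ} (hA : A.IsHermitian) {c : ℝ}
    (hc : ∀ x : V → ℝ, x ⬝ᵥ A *ᵥ x ≤ c * (x ⬝ᵥ x)) : maxEig hA ≤ c := by
  refine ciSup_le fun j => ?_
  set x : V → ℝ := ⇑(hA.eigenvectorBasis j)
  have hunit : x ⬝ᵥ x = 1 := by
    rw [← hA.eigenvectorBasis.inner_eq_one j, EuclideanSpace.inner_eq_star_dotProduct, star_trivial]
  calc hA.eigenvalues j = x ⬝ᵥ A *ᵥ x := by
        rw [hA.mulVec_eigenvectorBasis, dotProduct_smul, hunit, smul_eq_mul, mul_one]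
    _ ≤ c * (x ⬝ᵥ x) := hc x
    _ = c := by rw [hunit, mul_one]

/-- Wang–Yan–Qian: for a signed graph `Γ` on `n ≥ 1` vertices with balanced clique number
`ω_b(Γ) ≥ 1`, `λ₁(A(Γ)) ≤ n (1 - 1/ω_b(Γ))`. -/
theorem stmt17 {V : Type*} [Fintype V] [DecidableEq V] [Nonempty V]
    (G : SimpleGraph V)
    (σ : V → V → ℝ) (hσsymm : ∀ u v, σ u v = σ v u)
    (hσ : ∀ u v, G.Adj u v → σ u v = 1 ∨ σ u v = -1)
    (hωb : 1 ≤ balancedCliqueNum G σ)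
    (A : Matrix V V ℝ) (hAdef : ∀ u v, A u v = if G.Adj u v then σ u v else 0)
    (hA : A.IsHermitian) :
    maxEig hA ≤ (Fintype.card V : ℝ) * (1 - 1 / (balancedCliqueNum G σ : ℝ)) := by
  obtain rfl : A = signedAdjMatrix G σ := by
    ext u v
    exact hAdef u v
  have hω : 0 ≤ 1 - 1 / (balancedCliqueNum G σ : ℝ) :=
    sub_nonneg.mpr (by simpa using Nat.cast_inv_le_one (balancedCliqueNum G σ))
  refine maxEig_le_of_dotProduct_mulVec_le hA fun x => ?_
  calc x ⬝ᵥ signedAdjMatrix G σ *ᵥ x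
      ≤ (1 - 1 / balancedCliqueNum G σ) * (∑ v, |x v|) ^ 2 :=
        dotProduct_signedAdjMatrix_mulVec_le G hσsymm hσ x
    _ ≤ (1 - 1 / balancedCliqueNum G σ) * (Fintype.card V * (x ⬝ᵥ x)) := by
        gcongr
        simpa [dotProduct, ← sq] using
          sq_sum_le_card_mul_sum_sq (s := univ) (f := fun v => |x v|)
    _ = Fintype.card V * (1 - 1 / balancedCliqueNum G σ) * (x ⬝ᵥ x) := by ring
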